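/- Fix α ∈ (1/2 − 1/100, 1/2) and κ_0 > 0. There is a constant c > 0 such that for all sufficiently large m: if U, V ∈ {0,1}^m are independent uniformly random strings, then the probability that the test declares a match between U and V is at most exp(−c·m^α). -/

import Mathlib

open scoped BigOperators

/-- Weight of a single uniformly random `n`-bit string. -/
noncomputable def unif (n : ℕ) : ℝ := (1 / 2 : ℝ) ^ n

/-- Probability of an event `E` in a finite outcome space with weight `w`. -/
noncomputable def prob {Ω : Type*} [Fintype Ω] (w : Ω → ℝ) (E : Set Ω) : ℝ :=
  ∑ ω, E.indicator w ω

/-- Majority bit: `true` iff strictly more `1`s (`true`s) than `0`s. -/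
def Maj (W : List Bool) : Bool := decide (W.count false < W.count true)

/-- `seg U a m` : the block `U[a, a+m)` of the string `U`. -/
def seg (U : List Bool) (a m : ℕ) : List Bool := (U.drop a).take m

/-- The majority-block matching test with parameters `α, κ` on two blocks of length `m`:
divide into `⌊m^α⌋` consecutive blocks of length `⌊m^(1-α)⌋` and declare a match if more
than a `(1/2 + κ)`-fraction of the blocks have equal majority bits. -/
def matchTest (α κ : ℝ) (m : ℕ) (U V : List Bool) : Prop :=
  ((1 / 2 + κ) * (⌊(m : ℝ) ^ α⌋₊ : ℝ) : ℝ) <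
    (((Finset.range ⌊(m : ℝ) ^ α⌋₊).filter fun j =>
      Maj (seg U (j * ⌊(m : ℝ) ^ (1 - α)⌋₊) ⌊(m : ℝ) ^ (1 - α)⌋₊) =
      Maj (seg V (j * ⌊(m : ℝ) ^ (1 - α)⌋₊) ⌊(m : ℝ) ^ (1 - α)⌋₊)).card : ℝ)

/-!
Write the two majority bits of a block as signs `±1`. Agreement of the bits is then the product of
two independent signs of mean `β`, where `β` is minus the probability of a tie and so has
`β² ≤ 1 / (L + 1)` for blocks of length `L`. The moment generating function of such a product is
`cosh x + β² sinh x ≤ exp (x² / 2 + β² x)`. Disjoint blocks are independent, so the Chernoff bound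
for `k` blocks at `x = 2κ` gives a matching probability of at most `exp (-2κ (κ - β²) k)`.
-/

open Filter Finset
open scoped Topology

section Hyperbolic

theorem sinh_le_self_mul_cosh {x : ℝ} (hx : 0 ≤ x) : Real.sinh x ≤ x * Real.cosh x := by
  have deriv_le : ∀ y ∈ interior (Set.Icc 0 x), deriv Real.sinh y ≤ Real.cosh x := by
    intro y hy
    rw [interior_Icc] at hy
    rw [Real.deriv_sinh, Real.cosh_le_cosh, abs_of_pos hy.1, abs_of_nonneg hx]
    exact hy.2.le
  have mean_value := (convex_Icc 0 x).image_sub_le_mul_sub_of_deriv_le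
    Real.continuous_sinh.continuousOn Real.differentiable_sinh.differentiableOn deriv_le
    0 (Set.left_mem_Icc.2 hx) x (Set.right_mem_Icc.2 hx) hx
  simpa [mul_comm] using mean_value

theorem cosh_add_mul_sinh_le_exp {x s : ℝ} (hx : 0 ≤ x) (hs : 0 ≤ s) :
    Real.cosh x + s * Real.sinh x ≤ Real.exp (x ^ 2 / 2 + s * x) :=
  calc Real.cosh x + s * Real.sinh x
      ≤ Real.cosh x + s * (x * Real.cosh x) := by gcongr; exact sinh_le_self_mul_cosh hx
    _ = Real.cosh x * (s * x + 1) := by ring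
    _ ≤ Real.exp (x ^ 2 / 2) * Real.exp (s * x) := by
      gcongr
      · exact Real.cosh_le_exp_half_sq x
      · exact Real.add_one_le_exp (s * x)
    _ = Real.exp (x ^ 2 / 2 + s * x) := (Real.exp_add _ _).symm

end Hyperbolic

section Sign

/-- The sign `±1` of a bit, with `true` positive; it turns agreement of bits into a product. -/
def boolSign (b : Bool) : ℝ := if b then 1 else -1

theorem boolSign_mul_boolSign (a b : Bool) :
    boolSign a * boolSign b = if a = b then 1 else -1 := by
  cases a <;> cases b <;> simp [boolSign]

theorem sum_boolSign_mul_boolSign {ι : Type*} (s : Finset ι) (a b : ι → Bool) :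
    ∑ i ∈ s, boolSign (a i) * boolSign (b i) = 2 * #{i ∈ s | a i = b i} - #s := by
  have sign_eq (i : ι) :
      boolSign (a i) * boolSign (b i) = 2 * (if a i = b i then 1 else 0) - 1 := by
    rw [boolSign_mul_boolSign]
    split_ifs <;> norm_num
  simp only [sign_eq, sum_sub_distrib, ← mul_sum, sum_boole, sum_const, nsmul_eq_mul, mul_one]

theorem exp_mul_boolSign_mul_boolSign (x : ℝ) (a b : Bool) :
    Real.exp (x * (boolSign a * boolSign b)) =
      Real.cosh x + boolSign a * boolSign b * Real.sinh x := by
  rw [boolSign_mul_boolSign]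
  split_ifs
  · simp [Real.cosh_add_sinh]
  · simp [← Real.cosh_sub_sinh, sub_eq_add_neg]

end Sign

section Blocks

theorem seg_append_zero (W W' : List Bool) : seg (W ++ W') 0 W.length = W := by
  simp [seg]

theorem seg_append_succ_mul (W W' : List Bool) (j : ℕ) :
    seg (W ++ W') ((j + 1) * W.length) W.length = seg W' (j * W.length) W.length := by
  rw [seg, seg, add_one_mul, add_comm, List.drop_length_add_append]

theorem expect_fin_append {A M : Type*} [Fintype A] [AddCommMonoid M] [Module ℚ≥0 M] {l n : ℕ}
    (F : (Fin (l + n) → A) → M) :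
    𝔼 W, F W = 𝔼 u : Fin l → A, 𝔼 v : Fin n → A, F (Fin.append u v) := by
  rw [← expect_product', univ_product_univ]
  exact (Fintype.expect_equiv (Fin.appendEquiv l n) _ F fun _ => rfl).symm

variable {R : Type*} [CommSemiring R] [Module ℚ≥0 R] [IsScalarTower ℚ≥0 R R]
  [SMulCommClass ℚ≥0 R R]

theorem expect_prod_seg {k L m : ℕ} (hkL : k * L ≤ m) (g : ℕ → List Bool → R) :
    𝔼 U : Fin m → Bool, ∏ j ∈ range k, g j (seg (List.ofFn U) (j * L) L) =
      ∏ j ∈ range k, 𝔼 u : Fin L → Bool, g j (List.ofFn u) := by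
  induction k generalizing m g with
  | zero => simp
  | succ k ih =>
    obtain ⟨n, rfl⟩ := Nat.exists_eq_add_of_le ((Nat.le_mul_of_pos_left L k.succ_pos).trans hkL)
    have hkn : k * L ≤ n := by rw [add_one_mul] at hkL; omega
    have seg_zero (u : Fin L → Bool) (v : Fin n → Bool) :
        seg (List.ofFn (Fin.append u v)) 0 L = List.ofFn u := by
      simpa [List.ofFn_fin_append] using seg_append_zero (List.ofFn u) (List.ofFn v)
    have seg_succ (u : Fin L → Bool) (v : Fin n → Bool) (j : ℕ) :
        seg (List.ofFn (Fin.append u v)) ((j + 1) * L) L = seg (List.ofFn v) (j * L) L := by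
      simpa [List.ofFn_fin_append] using seg_append_succ_mul (List.ofFn u) (List.ofFn v) j
    simp only [expect_fin_append, prod_range_succ', zero_mul, seg_zero, seg_succ, ← expect_mul,
      ← mul_expect]
    rw [ih hkn fun j => g (j + 1)]

theorem expect_expect_prod_seg {k L m : ℕ} (hkL : k * L ≤ m) (g : List Bool → List Bool → R) :
    𝔼 U : Fin m → Bool, 𝔼 V : Fin m → Bool, ∏ j ∈ range k,
        g (seg (List.ofFn U) (j * L) L) (seg (List.ofFn V) (j * L) L) =
      (𝔼 u : Fin L → Bool, 𝔼 v : Fin L → Bool, g (List.ofFn u) (List.ofFn v)) ^ k :=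
  calc _ = 𝔼 U : Fin m → Bool, ∏ j ∈ range k,
          𝔼 v : Fin L → Bool, g (seg (List.ofFn U) (j * L) L) (List.ofFn v) :=
        expect_congr rfl fun U _ =>
          expect_prod_seg hkL fun j => g (seg (List.ofFn U) (j * L) L)
    _ = _ := by
        rw [expect_prod_seg hkL fun _ u => 𝔼 v : Fin L → Bool, g u (List.ofFn v), prod_const,
          card_range]

end Blocks

section Chernoff

theorem prob_lt_le_exp_mul_sum {Ω : Type*} [Fintype Ω] {w : Ω → ℝ} (hw : ∀ ω, 0 ≤ w ω)
    (X : Ω → ℝ) (a : ℝ) {x : ℝ} (hx : 0 ≤ x) :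
    prob w {ω | a < X ω} ≤ Real.exp (-(x * a)) * ∑ ω, w ω * Real.exp (x * X ω) := by
  rw [prob, mul_sum]
  refine sum_le_sum fun ω _ => Set.indicator_apply_le' (fun hω => ?_) fun _ => ?_
  · have one_le : 1 ≤ Real.exp (x * X ω - x * a) :=
      Real.one_le_exp (sub_nonneg.2 (mul_le_mul_of_nonneg_left (le_of_lt hω) hx))
    calc w ω ≤ w ω * Real.exp (x * X ω - x * a) := le_mul_of_one_le_right (hw ω) one_le
      _ = Real.exp (-(x * a)) * (w ω * Real.exp (x * X ω)) := by
        rw [sub_eq_add_neg, Real.exp_add]; ring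
  · have := hw ω
    positivity

theorem sum_unif_mul_unif_mul (m : ℕ) (F : (Fin m → Bool) × (Fin m → Bool) → ℝ) :
    ∑ ω, unif m * unif m * F ω = 𝔼 U, 𝔼 V, F (U, V) := by
  rw [← expect_product, univ_product_univ, Fintype.expect_eq_sum_div_card, ← mul_sum]
  simp [unif, field]

end Chernoff

section BlockStatistic

/-- The mean sign of the bit `S u` for a uniformly random string `u` of length `L`, that is,
`ℙ(S u = 1) - ℙ(S u = 0)`. -/
noncomputable def signMean (S : List Bool → Bool) (L : ℕ) : ℝ :=
  𝔼 u : Fin L → Bool, boolSign (S (List.ofFn u))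

variable (S : List Bool → Bool) {k L m : ℕ}

theorem expect_expect_exp_boolSign_mul_boolSign (L : ℕ) (x : ℝ) :
    𝔼 u : Fin L → Bool, 𝔼 v : Fin L → Bool,
        Real.exp (x * (boolSign (S (List.ofFn u)) * boolSign (S (List.ofFn v)))) =
      Real.cosh x + signMean S L ^ 2 * Real.sinh x := by
  simp only [exp_mul_boolSign_mul_boolSign, expect_add_distrib, Fintype.expect_const, ← expect_mul,
    ← mul_expect, signMean, sq]

theorem expect_expect_exp_sum_boolSign_le (hkL : k * L ≤ m) {x : ℝ} (hx : 0 ≤ x) :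
    𝔼 U : Fin m → Bool, 𝔼 V : Fin m → Bool, Real.exp (x * ∑ j ∈ range k,
        boolSign (S (seg (List.ofFn U) (j * L) L)) *
          boolSign (S (seg (List.ofFn V) (j * L) L))) ≤
      Real.exp (k * (x ^ 2 / 2 + signMean S L ^ 2 * x)) := by
  simp only [mul_sum, Real.exp_sum]
  rw [expect_expect_prod_seg hkL fun u v => Real.exp (x * (boolSign (S u) * boolSign (S v))),
    expect_expect_exp_boolSign_mul_boolSign, Real.exp_nat_mul]
  have mgf_nonneg : 0 ≤ Real.cosh x + signMean S L ^ 2 * Real.sinh x :=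
    add_nonneg (Real.cosh_pos x).le (mul_nonneg (sq_nonneg _) (Real.sinh_nonneg_iff.2 hx))
  exact pow_le_pow_left₀ mgf_nonneg (cosh_add_mul_sinh_le_exp hx (sq_nonneg _)) k

theorem prob_lt_card_agreeing_blocks_le (hkL : k * L ≤ m) {κ : ℝ} (hκ : 0 ≤ κ) :
    prob (fun _ : (Fin m → Bool) × (Fin m → Bool) => unif m * unif m)
        {ω | (1 / 2 + κ) * k < #{j ∈ range k |
          S (seg (List.ofFn ω.1) (j * L) L) = S (seg (List.ofFn ω.2) (j * L) L)}} ≤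
      Real.exp (-(2 * κ * (κ - signMean S L ^ 2) * k)) := by
  have agreeing_iff (ω : (Fin m → Bool) × (Fin m → Bool)) :
      (1 / 2 + κ) * k < #{j ∈ range k |
          S (seg (List.ofFn ω.1) (j * L) L) = S (seg (List.ofFn ω.2) (j * L) L)} ↔
        2 * κ * k < ∑ j ∈ range k, boolSign (S (seg (List.ofFn ω.1) (j * L) L)) *
          boolSign (S (seg (List.ofFn ω.2) (j * L) L)) := by
    rw [sum_boolSign_mul_boolSign, card_range]
    constructor <;> intro h <;> linarith
  have unif_nonneg : 0 ≤ unif m * unif m := mul_self_nonneg _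
  simp only [agreeing_iff]
  -- `x = 2κ` minimises the exponent `x² / 2 - 2κx` left when `β = 0`.
  calc _ ≤ Real.exp (-(2 * κ * (2 * κ * k))) * _ :=
        prob_lt_le_exp_mul_sum (fun _ => unif_nonneg) _ _ (by positivity)
    _ ≤ Real.exp (-(2 * κ * (2 * κ * k))) *
          Real.exp (k * ((2 * κ) ^ 2 / 2 + signMean S L ^ 2 * (2 * κ))) := by
        rw [sum_unif_mul_unif_mul]
        gcongr
        exact expect_expect_exp_sum_boolSign_le S hkL (by positivity)
    _ = _ := by rw [← Real.exp_add]; ring_nf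

end BlockStatistic

section Ties

theorem centralBinom_sq_mul_le (n : ℕ) : n.centralBinom ^ 2 * (2 * n + 1) ≤ 4 ^ (2 * n) := by
  induction n with
  | zero => simp
  | succ n ih =>
    refine Nat.le_of_mul_le_mul_left ?_ (pow_pos n.succ_pos 2)
    calc (n + 1) ^ 2 * ((n + 1).centralBinom ^ 2 * (2 * (n + 1) + 1))
        = ((n + 1) * (n + 1).centralBinom) ^ 2 * (2 * n + 3) := by ring
      _ = 4 * ((2 * n + 1) * (2 * n + 3)) * (n.centralBinom ^ 2 * (2 * n + 1)) := by
        rw [Nat.succ_mul_centralBinom_succ]; ring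
      _ ≤ 4 * (4 * (n + 1) ^ 2) * 4 ^ (2 * n) := by
        gcongr 4 * ?_ * ?_
        nlinarith
      _ = (n + 1) ^ 2 * 4 ^ (2 * (n + 1)) := by ring

theorem count_ofFn {A : Type*} [DecidableEq A] {n : ℕ} (u : Fin n → A) (a : A) :
    (List.ofFn u).count a = #{i | u i = a} := by
  induction n with
  | zero => simp
  | succ n ih =>
    rw [List.ofFn_succ, List.count_cons, ih, Fin.card_filter_univ_succ]
    by_cases h : u 0 = a <;> simp [h]

theorem card_filter_count_true_ofFn_eq (n j : ℕ) :
    #{u : Fin n → Bool | (List.ofFn u).count true = j} = n.choose j := by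
  rw [← card_fin n, ← card_powersetCard, card_fin]
  refine card_nbij' (fun u => ({i | u i = true} : Finset (Fin n))) (fun s i => decide (i ∈ s))
    ?_ ?_ ?_ ?_ <;>
    simp [Set.MapsTo, Set.LeftInvOn, count_ofFn]

theorem count_true_add_count_false_ofFn {n : ℕ} (u : Fin n → Bool) :
    (List.ofFn u).count true + (List.ofFn u).count false = n := by
  simp

theorem card_filter_tied_two_mul (n : ℕ) :
    #{u : Fin (2 * n) → Bool | (List.ofFn u).count true = (List.ofFn u).count false} =
      n.centralBinom := by
  rw [Nat.centralBinom, ← card_filter_count_true_ofFn_eq]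
  refine congrArg card (filter_congr fun u _ => ?_)
  have := count_true_add_count_false_ofFn u
  omega

theorem boolSign_Maj_add_boolSign_Maj_map_not (W : List Bool) :
    boolSign (Maj W) + boolSign (Maj (W.map not)) =
      -2 * if W.count true = W.count false then 1 else 0 := by
  have count_map_not (b : Bool) : (W.map not).count (!b) = W.count b :=
    List.count_map_of_injective W not Bool.not_injective b
  have count_true := count_map_not false
  have count_false := count_map_not true
  simp only [Bool.not_false, Bool.not_true] at count_true count_false
  simp only [boolSign, Maj, count_true, count_false, decide_eq_true_eq]
  rcases lt_trichotomy (W.count true) (W.count false) with h | h | h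
  · simp [h, h.ne, h.not_gt]
  · norm_num [h]
  · simp [h, h.ne', h.not_gt]

theorem signMean_Maj_eq (L : ℕ) :
    signMean Maj L =
      -(#{u : Fin L → Bool | (List.ofFn u).count true = (List.ofFn u).count false} / 2 ^ L) := by
  have eq_map_not : signMean Maj L = 𝔼 u : Fin L → Bool, boolSign (Maj ((List.ofFn u).map not)) :=
    Fintype.expect_equiv (Equiv.piCongrRight fun _ : Fin L => Equiv.boolNot) _ _ fun u => by
      simp [Function.comp_def]
  have twice : 2 * signMean Maj L = -2 * 𝔼 u : Fin L → Bool,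
      if (List.ofFn u).count true = (List.ofFn u).count false then (1 : ℝ) else 0 := by
    rw [two_mul]
    nth_rw 2 [eq_map_not]
    rw [signMean, ← expect_add_distrib, mul_expect]
    exact expect_congr rfl fun u _ => boolSign_Maj_add_boolSign_Maj_map_not _
  rw [Fintype.expect_eq_sum_div_card, sum_boole, Fintype.card_fun, Fintype.card_bool,
    Fintype.card_fin, Nat.cast_pow, Nat.cast_ofNat] at twice
  linarith

theorem signMean_Maj_of_odd {L : ℕ} (hL : Odd L) : signMean Maj L = 0 := by
  rw [signMean_Maj_eq, filter_false_of_mem]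
  · simp
  · intro u _ tied
    have := count_true_add_count_false_ofFn u
    grind

theorem signMean_Maj_sq_le (L : ℕ) : signMean Maj L ^ 2 ≤ 1 / (L + 1) := by
  rcases Nat.even_or_odd' L with ⟨n, rfl | rfl⟩
  · have bound : (n.centralBinom : ℝ) ^ 2 * (2 * n + 1) ≤ 4 ^ (2 * n) := by
      exact_mod_cast centralBinom_sq_mul_le n
    have two_pow_sq : ((2 : ℝ) ^ (2 * n)) ^ 2 = 4 ^ (2 * n) := by rw [pow_right_comm]; norm_num
    rw [signMean_Maj_eq, card_filter_tied_two_mul, neg_sq, div_pow, two_pow_sq,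
      div_le_div_iff₀ (by positivity) (by positivity), one_mul]
    exact_mod_cast bound
  · rw [signMean_Maj_of_odd ⟨n, rfl⟩, zero_pow two_ne_zero]
    positivity

theorem tendsto_signMean_Maj_sq : Tendsto (fun L => signMean Maj L ^ 2) atTop (𝓝 0) :=
  squeeze_zero (fun _ => sq_nonneg _) signMean_Maj_sq_le tendsto_one_div_add_atTop_nhds_zero_nat

end Ties

section MatchTest

variable {α κ : ℝ}

theorem floor_rpow_mul_floor_rpow_one_sub_le {x : ℝ} (hx : 0 ≤ x) (α : ℝ) :
    (⌊x ^ α⌋₊ * ⌊x ^ (1 - α)⌋₊ : ℝ) ≤ x :=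
  calc (⌊x ^ α⌋₊ * ⌊x ^ (1 - α)⌋₊ : ℝ) ≤ x ^ α * x ^ (1 - α) := by
        gcongr <;> exact Nat.floor_le (by positivity)
    _ = x := by rw [← Real.rpow_add' hx (by simp), add_sub_cancel, Real.rpow_one]

theorem prob_matchTest_le (m : ℕ) (hκ : 0 ≤ κ) :
    prob (fun _ : (Fin m → Bool) × (Fin m → Bool) => unif m * unif m)
        {ω | matchTest α κ m (List.ofFn ω.1) (List.ofFn ω.2)} ≤
      Real.exp (-(2 * κ * (κ - signMean Maj ⌊(m : ℝ) ^ (1 - α)⌋₊ ^ 2) * ⌊(m : ℝ) ^ α⌋₊)) :=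
  prob_lt_card_agreeing_blocks_le Maj
    (mod_cast floor_rpow_mul_floor_rpow_one_sub_le m.cast_nonneg α) hκ

theorem tendsto_signMean_Maj_sq_floor_rpow (hα : α ≤ 1) :
    Tendsto (fun m : ℕ => signMean Maj ⌊(m : ℝ) ^ (1 - α)⌋₊ ^ 2) atTop (𝓝 0) := by
  rcases hα.lt_or_eq with hα | rfl
  · exact tendsto_signMean_Maj_sq.comp <| tendsto_nat_floor_atTop.comp <|
      (tendsto_rpow_atTop (sub_pos.2 hα)).comp tendsto_natCast_atTop_atTop
  · simp [signMean_Maj_of_odd odd_one]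

theorem independent_strings_rarely_match_general (hα : α ∈ Set.Icc 0 1) (hκ : 0 < κ) :
    ∃ c > (0 : ℝ), ∃ m0 : ℕ, ∀ m : ℕ, m0 ≤ m →
      prob (fun _ : (Fin m → Bool) × (Fin m → Bool) => unif m * unif m)
        {ω | matchTest α κ m (List.ofFn ω.1) (List.ofFn ω.2)}
      ≤ Real.exp (-c * (m : ℝ) ^ α) := by
  refine ⟨κ ^ 2 / 2, by positivity, eventually_atTop.1 ?_⟩
  filter_upwards [(tendsto_signMean_Maj_sq_floor_rpow hα.2).eventually_le_const (half_pos hκ),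
    eventually_gt_atTop 0] with m bias_le hm
  have half_le_floor : (m : ℝ) ^ α / 2 ≤ ⌊(m : ℝ) ^ α⌋₊ :=
    (Nat.div_two_lt_floor (Real.one_le_rpow (mod_cast hm) hα.1)).le
  refine (prob_matchTest_le m hκ.le).trans (Real.exp_le_exp.2 ?_)
  calc -(2 * κ * (κ - signMean Maj ⌊(m : ℝ) ^ (1 - α)⌋₊ ^ 2) * ⌊(m : ℝ) ^ α⌋₊)
      ≤ -(2 * κ * (κ - κ / 2) * ⌊(m : ℝ) ^ α⌋₊) := by gcongr
    _ = -(κ ^ 2 * ⌊(m : ℝ) ^ α⌋₊) := by ring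
    _ ≤ -(κ ^ 2 * ((m : ℝ) ^ α / 2)) := by gcongr
    _ = -(κ ^ 2 / 2) * (m : ℝ) ^ α := by ring

end MatchTest

/-- **Independent strings rarely match.**  Fix `α ∈ (1/2 - 1/100, 1/2)` and `κ₀ > 0`.
There is `c > 0` such that for all sufficiently large `m`: if `U, V ∈ {0,1}^m` are
independent uniformly random strings, then the probability that the test declares a
match between `U` and `V` is at most `exp(-c·m^α)`. -/
theorem independent_strings_rarely_match
    (α κ0 : ℝ) (hα : α ∈ Set.Ioo (1 / 2 - 1 / 100 : ℝ) (1 / 2)) (hκ0 : 0 < κ0) :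
    ∃ c > (0 : ℝ), ∃ m0 : ℕ, ∀ m : ℕ, m0 ≤ m →
      prob (fun _ : (Fin m → Bool) × (Fin m → Bool) => unif m * unif m)
        {ω | matchTest α κ0 m (List.ofFn ω.1) (List.ofFn ω.2)}
      ≤ Real.exp (-c * (m : ℝ) ^ α) :=
  independent_strings_rarely_match_general ⟨by linarith [hα.1], by linarith [hα.2]⟩ hκ0
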